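/- arXiv:2311.06387 — 2 statements merged into one kernel-verified Lean document; each statement's English description precedes it below -/
import Mathlib

section
/- Let P ⊆ Φ_{B_n} be a signed poset whose weight cone K^wt_P is pointed (contains no nonzero f with both f and −f in K^wt_P). Then: (a) K^wt_P equals the set of all nonnegative real linear combinations of the vectors χ_J, where J ranges over the connected nonextensible ideals of P; and (b) a nonzero v ∈ K^wt_P is an extreme vector of K^wt_P — meaning that whenever v = a + b with a, b ∈ K^wt_P, both a and b are nonnegative scalar multiples of v — if and only if v is a positive scalar multiple of χ_J for some connected nonextensible ideal J of P. -/
open scoped Classical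

noncomputable section

/-- Signed index set `±[n]`: `(true, i)` represents `+i`, `(false, i)` represents `-i`. -/
abbrev SIdx (n : ℕ) := Bool × Fin n

/-- Negation `a ↦ -a` on `±[n]`. -/
def negS {n : ℕ} (a : SIdx n) : SIdx n := (!a.1, a.2)

/-- Standard basis vector `e_i` of `ℝ^n`. -/
def stdB (n : ℕ) (i : Fin n) : Fin n → ℝ := Pi.single i 1

/-- `rsgn true = 1`, `rsgn false = -1`. -/
def rsgn (s : Bool) : ℝ := if s then 1 else -1

/-- `v(a)` for `a ∈ ±[n]`: `v(+i) = e_i`, `v(-i) = -e_i`. -/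
def vS {n : ℕ} (a : SIdx n) : Fin n → ℝ := rsgn a.1 • stdB n a.2

/-- `v` on `±[n] ∪ {0}` (with `none` playing the role of `0`). -/
def vO {n : ℕ} : Option (SIdx n) → (Fin n → ℝ)
  | none => 0
  | some a => vS a

/-- Negation on `±[n] ∪ {0}`, fixing `0`. -/
def negO {n : ℕ} : Option (SIdx n) → Option (SIdx n)
  | none => none
  | some a => some (negS a)

/-- Standard inner product on `ℝ^n`. -/
def dotR {n : ℕ} (x y : Fin n → ℝ) : ℝ := ∑ i, x i * y i

/-- The type `B_n` root system `Φ_{B_n}`. -/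
def BnRoots (n : ℕ) : Set (Fin n → ℝ) :=
  {α | (∃ i j : Fin n, i < j ∧ ∃ s t : Bool, α = rsgn s • stdB n i + rsgn t • stdB n j) ∨
    ∃ i : Fin n, ∃ s : Bool, α = rsgn s • stdB n i}

/-- The positive roots `Φ⁺_{B_n}`. -/
def BnPos (n : ℕ) : Set (Fin n → ℝ) :=
  {α | (∃ i j : Fin n, i < j ∧ ∃ t : Bool, α = stdB n i + rsgn t • stdB n j) ∨
    ∃ i : Fin n, α = stdB n i}

/-- The type `C_n` root system `Φ_{C_n}`. -/
def CnRoots (n : ℕ) : Set (Fin n → ℝ) :=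
  {α | (∃ i j : Fin n, i < j ∧ ∃ s t : Bool, α = rsgn s • stdB n i + rsgn t • stdB n j) ∨
    ∃ i : Fin n, ∃ s : Bool, α = (2 * rsgn s) • stdB n i}

/-- Nonnegative real linear combinations of elements of `S`. -/
def nnSpan {n : ℕ} (S : Set (Fin n → ℝ)) : Set (Fin n → ℝ) :=
  {x | ∃ (r : ℕ) (c : Fin r → ℝ) (β : Fin r → (Fin n → ℝ)),
    (∀ m, 0 ≤ c m) ∧ (∀ m, β m ∈ S) ∧ x = ∑ m, c m • β m}

/-- A signed poset: a subset of `Φ_{B_n}`, antisymmetric and closed under positive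
linear combinations remaining in `Φ_{B_n}`. -/
def IsSignedPoset (n : ℕ) (P : Set (Fin n → ℝ)) : Prop :=
  P ⊆ BnRoots n ∧ (∀ α ∈ P, -α ∉ P) ∧ ∀ α ∈ BnRoots n, α ∈ nnSpan P → α ∈ P

/-- A `C_n`-signed poset. -/
def IsCnSignedPoset (n : ℕ) (Q : Set (Fin n → ℝ)) : Prop :=
  Q ⊆ CnRoots n ∧ (∀ α ∈ Q, -α ∉ Q) ∧ ∀ α ∈ CnRoots n, α ∈ nnSpan Q → α ∈ Q

/-- The root cone `K^rt_P`. -/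
def rootCone {n : ℕ} (P : Set (Fin n → ℝ)) : Set (Fin n → ℝ) := nnSpan P

/-- The weight cone `K^wt_P`. -/
def weightCone {n : ℕ} (P : Set (Fin n → ℝ)) : Set (Fin n → ℝ) :=
  {f | ∀ α ∈ P, 0 ≤ dotR f α}

/-- The Fischer (strict) order on `±[n] ∪ {0}`:
`a < b` iff `v(a) - v(b) ∈ P`, or (`b = -a ≠ 0` and `v(a) ∈ P`). -/
def fLT {n : ℕ} (P : Set (Fin n → ℝ)) (a b : Option (SIdx n)) : Prop :=
  vO a - vO b ∈ P ∨ (a ≠ none ∧ b = negO a ∧ vO a ∈ P)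

/-- A subset of `±[n]` is isotropic if it contains no pair `{i, -i}`. -/
def Isotropic {n : ℕ} (J : Finset (SIdx n)) : Prop :=
  ∀ i : Fin n, ¬((true, i) ∈ J ∧ (false, i) ∈ J)

/-- Signed characteristic vector of a subset of `±[n]`. -/
def chiF {n : ℕ} (J : Finset (SIdx n)) : Fin n → ℝ := fun i =>
  if (true, i) ∈ J then 1 else if (false, i) ∈ J then -1 else 0

/-- `J` is an ideal of the signed poset `P`. -/
def IsIdeal {n : ℕ} (P : Set (Fin n → ℝ)) (J : Finset (SIdx n)) : Prop :=
  Isotropic J ∧ ∀ α ∈ P, 0 ≤ dotR (chiF J) α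

/-- Comparability in the Fischer order of `P`. -/
def fComp {n : ℕ} (P : Set (Fin n → ℝ)) (a b : SIdx n) : Prop :=
  fLT P (some a) (some b) ∨ fLT P (some b) (some a)

/-- One step in the comparability graph on a subset `J` of `±[n]`. -/
def connStep {n : ℕ} (P : Set (Fin n → ℝ)) (J : Finset (SIdx n)) (a b : SIdx n) : Prop :=
  a ∈ J ∧ b ∈ J ∧ fComp P a b

/-- `J` is connected: nonempty, and any two of its elements are joined by a path inside `J`
in the comparability graph of the Fischer order of `P`. -/
def IsConnectedIdl {n : ℕ} (P : Set (Fin n → ℝ)) (J : Finset (SIdx n)) : Prop :=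
  J.Nonempty ∧ ∀ a ∈ J, ∀ b ∈ J, Relation.ReflTransGen (connStep P J) a b

/-- A connected ideal of `P`. -/
def IsConnIdeal {n : ℕ} (P : Set (Fin n → ℝ)) (J : Finset (SIdx n)) : Prop :=
  IsIdeal P J ∧ IsConnectedIdl P J

/-- Support `supp J = {|a| : a ∈ J}`. -/
def suppF {n : ℕ} (J : Finset (SIdx n)) : Finset (Fin n) := J.image Prod.snd

/-- `J` and `K` intersect nontrivially. -/
def NontrivInter {n : ℕ} (J K : Finset (SIdx n)) : Prop :=
  (suppF J ∩ suppF K).Nonempty ∧ ¬J ⊆ K ∧ ¬K ⊆ J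

/-- `J` and `K` intersect trivially. -/
def TrivInter {n : ℕ} (J K : Finset (SIdx n)) : Prop := ¬NontrivInter J K

/-- A signed permutation, as an anti-symmetric bijection of `±[n]`. -/
def IsSPerm {n : ℕ} (w : SIdx n ≃ SIdx n) : Prop := ∀ a, w (negS a) = negS (w a)

/-- Linear action of a signed permutation on `ℝ^n`, determined by `w(e_i) = v(w(+i))`. -/
def spAct {n : ℕ} (w : SIdx n ≃ SIdx n) (x : Fin n → ℝ) : Fin n → ℝ :=
  ∑ i, x i • vS (w (true, i))

/-- `w` is a linear extension of `P`: a signed permutation with `P ⊆ w(Φ⁺_{B_n})`. -/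
def IsLinExt {n : ℕ} (P : Set (Fin n → ℝ)) (w : SIdx n ≃ SIdx n) : Prop :=
  IsSPerm w ∧ ∀ α ∈ P, ∃ β ∈ BnPos n, α = spAct w β

/-- The (finite) set `𝓛(P)` of linear extensions of `P`. -/
def linExts (n : ℕ) (P : Set (Fin n → ℝ)) : Finset (SIdx n ≃ SIdx n) :=
  Finset.univ.filter (IsLinExt P)

/-- Simple roots of `Φ_{B_n}`: `α_i = e_i - e_{i+1}` for `i < n - 1`, `α_{n-1} = e_{n-1}`
(0-indexed). -/
def simpleRoot (n : ℕ) (i : Fin n) : Fin n → ℝ := fun j =>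
  (if j = i then (1 : ℝ) else 0) - if (j : ℕ) = (i : ℕ) + 1 then 1 else 0

/-- `J^w_m = {w(1), …, w(m)}` (0-indexed: the images under `w` of `+1, …, +(m+1)`). -/
def JwSet {n : ℕ} (w : SIdx n ≃ SIdx n) (m : Fin n) : Finset (SIdx n) :=
  (Finset.univ.filter (fun j : Fin n => j ≤ m)).image (fun j => w (true, j))

/-- An extensible ideal of `P`. -/
def Extensible (n : ℕ) (P : Set (Fin n → ℝ)) (J : Finset (SIdx n)) : Prop :=
  ∃ I : Finset (SIdx n), I.Nonempty ∧ Disjoint I J ∧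
    IsIdeal P (J ∪ I) ∧ IsIdeal P (J ∪ I.image negS)

/-- The finite set `J_conn(P)` of connected ideals of `P`. -/
def JconnF (n : ℕ) (P : Set (Fin n → ℝ)) : Finset (Finset (SIdx n)) :=
  Finset.univ.filter (IsConnIdeal P)

/-- Membership in `Π(P)`: an unordered pair of nontrivially intersecting connected ideals. -/
def inPiP {n : ℕ} (P : Set (Fin n → ℝ)) (p : Sym2 (Finset (SIdx n))) : Prop :=
  ∃ J K : Finset (SIdx n),
    p = s(J, K) ∧ IsConnIdeal P J ∧ IsConnIdeal P K ∧ NontrivInter J K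

/-- The finite set `Π(P)` of unordered pairs of nontrivially intersecting connected ideals. -/
def PiP (n : ℕ) (P : Set (Fin n → ℝ)) : Finset (Sym2 (Finset (SIdx n))) :=
  Finset.univ.filter (inPiP P)

/-- No connected ideal of `P` intersects two or more other connected ideals nontrivially. -/
def NoDoubleNontriv (n : ℕ) (P : Set (Fin n → ℝ)) : Prop :=
  ∀ J K K' : Finset (SIdx n), IsConnIdeal P J → IsConnIdeal P K → IsConnIdeal P K' →
    NontrivInter J K → NontrivInter J K' → K = K'

/-- The connected component of `a` inside `J` (w.r.t. the Fischer comparability graph). -/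
def componentIn {n : ℕ} (P : Set (Fin n → ℝ)) (J : Finset (SIdx n)) (a : SIdx n) :
    Finset (SIdx n) :=
  J.filter (fun b => Relation.ReflTransGen (connStep P J) a b)

/-- The set of connected components of `J`. -/
def componentsOf {n : ℕ} (P : Set (Fin n → ℝ)) (J : Finset (SIdx n)) :
    Finset (Finset (SIdx n)) :=
  J.image (componentIn P J)

/-- The signed support `supp±(f) = {sgn(f_i)·i : f_i ≠ 0}` of a vector `f ∈ ℝ^n`. -/
def suppPM {n : ℕ} (f : Fin n → ℝ) : Finset (SIdx n) :=
  Finset.univ.filter (fun a : SIdx n => if a.1 then 0 < f a.2 else f a.2 < 0)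

/-- Index type for the variables `U_J`, `J` a connected ideal of `P`. -/
abbrev ConnIdx (n : ℕ) (P : Set (Fin n → ℝ)) := {J : Finset (SIdx n) // IsConnIdeal P J}

/-- Integer signed characteristic vector, as an exponent vector for Laurent monomials. -/
def chiZ {n : ℕ} (J : Finset (SIdx n)) : Fin n →₀ ℤ :=
  Finsupp.equivFunOnFinite.symm (fun i =>
    if (true, i) ∈ J then 1 else if (false, i) ∈ J then -1 else 0)

/-- The map `φ : k[U_J : J ∈ J_conn(P)] → k[x_1^{±1}, …, x_n^{±1}]`, `U_J ↦ x^{χ_J}`. -/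
def phiWt (n : ℕ) (P : Set (Fin n → ℝ)) (k : Type) [Field k] :
    MvPolynomial (ConnIdx n P) k →ₐ[k] AddMonoidAlgebra k (Fin n →₀ ℤ) :=
  MvPolynomial.aeval (fun J => AddMonoidAlgebra.single (chiZ J.val) 1)

/-- The binomial `syz(U_J, U_K) = U_J U_K - (∏_A U_A) (∏_B U_B)`, where `A` runs over the
connected components of `J ∩ K` and `B` over the connected components of `supp±(χ_J + χ_K)`. -/
def syzPoly (n : ℕ) (P : Set (Fin n → ℝ)) (k : Type) [Field k] (J K : ConnIdx n P) :
    MvPolynomial (ConnIdx n P) k :=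
  MvPolynomial.X J * MvPolynomial.X K -
    (∏ A ∈ Finset.univ.filter
        (fun A : ConnIdx n P => (A : Finset (SIdx n)) ∈ componentsOf P (J.val ∩ K.val)),
        MvPolynomial.X A) *
      ∏ B ∈ Finset.univ.filter
        (fun B : ConnIdx n P =>
          (B : Finset (SIdx n)) ∈ componentsOf P (suppPM (chiF J.val + chiF K.val))),
        MvPolynomial.X B

/-- `θ_1, …, θ_r` is a regular sequence: the ideal it generates is proper, and each `θ_{m+1}`
is a non-zero-divisor modulo the ideal generated by `θ_1, …, θ_m`. -/
def IsRegSeq {R : Type} [CommRing R] {r : ℕ} (θ : Fin r → R) : Prop :=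
  Ideal.span (Set.range θ) ≠ ⊤ ∧
    ∀ (m : ℕ) (hm : m < r) (x : R),
      θ ⟨m, hm⟩ * x ∈ Ideal.span (θ '' {j : Fin r | (j : ℕ) < m}) →
        x ∈ Ideal.span (θ '' {j : Fin r | (j : ℕ) < m})

/-- The induced signed poset `P_A = P ∩ span_ℝ{e_i : i ∈ A}`. -/
def inducedPoset (n : ℕ) (P : Set (Fin n → ℝ)) (A : Finset (Fin n)) : Set (Fin n → ℝ) :=
  {α | α ∈ P ∧ α ∈ Submodule.span ℝ (stdB n '' (A : Set (Fin n)))}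

/-- The major index of a signed permutation. -/
def majB {n : ℕ} (w : SIdx n ≃ SIdx n) : ℕ :=
  ∑ i ∈ Finset.univ.filter
      (fun i : Fin n => spAct w (simpleRoot n i) ∉ BnPos n), ((i : ℕ) + 1)

/-- `[m]_q = 1 + q + ⋯ + q^{m-1}` in `ℤ[q]`. -/
def qInt (m : ℕ) : Polynomial ℤ := ∑ t ∈ Finset.range m, Polynomial.X ^ t

/-- The symmetric function `{J, K} ↦ ⟨x, χ_J + χ_K⟩` on unordered pairs. -/
def pairDot {n : ℕ} (x : Fin n → ℝ) : Sym2 (Finset (SIdx n)) → ℝ :=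
  Sym2.lift ⟨fun J K => dotR x (chiF J + chiF K),
    fun J K => congrArg (dotR x) (add_comm (chiF J) (chiF K))⟩

/-- The symmetric function `{J, K} ↦ [|J| + |K|]_q` on unordered pairs. -/
def pairQ {n : ℕ} : Sym2 (Finset (SIdx n)) → Polynomial ℤ :=
  Sym2.lift ⟨fun J K => qInt (J.card + K.card),
    fun J K => congrArg qInt (Nat.add_comm J.card K.card)⟩

/-- The principal order ideal `I_≤(a)` in the Fischer order restricted to `±[n]`. -/
def Ile {n : ℕ} (P : Set (Fin n → ℝ)) (a : SIdx n) : Set (SIdx n) :=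
  {b | b = a ∨ fLT P (some b) (some a)}

/-- A set of signed indices is isotropic if it contains no pair `{i, -i}`. -/
def IsoSet {n : ℕ} (S : Set (SIdx n)) : Prop :=
  ∀ i : Fin n, ¬((true, i) ∈ S ∧ (false, i) ∈ S)

/-- A covering pair of the Fischer order of `P`. -/
def CovPair {n : ℕ} (P : Set (Fin n → ℝ)) (a b : Option (SIdx n)) : Prop :=
  fLT P a b ∧ ¬∃ c : Option (SIdx n), fLT P a c ∧ fLT P c b

/-- The set of covering roots of `P`. -/
def covRoots {n : ℕ} (P : Set (Fin n → ℝ)) : Set (Fin n → ℝ) :=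
  {x | ∃ a b : Option (SIdx n), CovPair P a b ∧ x = vO a - vO b}

/-- The set `J_ε = {i : ε_i = 1} ∪ {-i : ε_i = -1}` attached to a `{-1,0,1}`-vector. -/
def Jeps {n : ℕ} (ε : Fin n → ℝ) : Set (SIdx n) :=
  {a | (a.1 = true ∧ ε a.2 = 1) ∨ (a.1 = false ∧ ε a.2 = -1)}

/-!
The weight cone consists of the vectors `f` whose signed coordinates `a ↦ ⟨f, v(a)⟩` reverse the
Fischer order. Postcomposing with a monotone odd function preserves this property. Taking the sign
shows that the signed support of `f` is an ideal; soft thresholding at the smallest nonzero `|f i|`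
lets one subtract a multiple of its characteristic vector and stay in the cone. Since the connected
components of an ideal are ideals, the cone is generated by the connected ideals, and a finitely
generated salient cone is generated by the extreme vectors among its generators.

A connected ideal `J` is extreme exactly when it is nonextensible. On the one hand
`χ_J = (χ_{J ∪ I} + χ_{J ∪ -I}) / 2` for an extension `I`. On the other hand, if `χ_J = a + b` then
connectedness makes `a` constant, say equal to `c`, on `J`, so that `g = a - c χ_J` vanishes on `J`
and `M χ_J ± g` lies in the cone for large `M`; if `g ≠ 0`, its signed support extends `J`.
-/

section ExtremeVector

variable {𝕜 E : Type*} [Field 𝕜] [LinearOrder 𝕜] [IsStrictOrderedRing 𝕜] [AddCommGroup E]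
  [Module 𝕜 E] {C : PointedCone 𝕜 E} {v : E}

open PointedCone

/-- An extreme vector of a cone, one spanning an extreme ray: it decomposes inside the cone only
into nonnegative multiples of itself. The zero vector is not excluded. -/
def IsExtremeVector (C : PointedCone 𝕜 E) (v : E) : Prop :=
  ∀ a ∈ C, ∀ b ∈ C, v = a + b → (∃ c : 𝕜, 0 ≤ c ∧ a = c • v) ∧ ∃ c : 𝕜, 0 ≤ c ∧ b = c • v

theorem IsExtremeVector.of_left
    (h : ∀ a ∈ C, ∀ b ∈ C, v = a + b → ∃ c : 𝕜, 0 ≤ c ∧ a = c • v) : IsExtremeVector C v :=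
  fun a ha b hb hab => ⟨h a ha b hb hab, h b hb a ha (hab.trans (add_comm a b))⟩

theorem IsExtremeVector.smul (hv : IsExtremeVector C v) {t : 𝕜} (ht : 0 < t) :
    IsExtremeVector C (t • v) := by
  refine .of_left fun a ha b hb hab => ?_
  have hv_eq : v = t⁻¹ • a + t⁻¹ • b := by
    rw [← smul_add, ← hab, inv_smul_smul₀ ht.ne']
  obtain ⟨⟨c, hc, hac⟩, -⟩ := hv _ (C.smul_mem (inv_nonneg.2 ht.le) ha) _
    (C.smul_mem (inv_nonneg.2 ht.le) hb) hv_eq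
  exact ⟨c, hc, by rw [smul_comm, ← hac, smul_inv_smul₀ ht.ne']⟩

theorem eq_zero_of_add_eq_zero_of_salient (hC : (C : ConvexCone 𝕜 E).Salient) {x y : E}
    (hx : x ∈ C) (hy : y ∈ C) (hxy : x + y = 0) : x = 0 := by
  by_contra hx0
  exact hC x hx hx0 (neg_eq_of_add_eq_zero_right hxy ▸ hy)

theorem isExtremeVector_hull_insert {s : Set E}
    (hsal : (hull 𝕜 (insert v s) : ConvexCone 𝕜 E).Salient) (hv : v ∉ hull 𝕜 s) :
    IsExtremeVector (hull 𝕜 (insert v s)) v := by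
  refine .of_left fun a ha b hb hab => ?_
  obtain ⟨⟨c, hc⟩, a', ha', rfl⟩ := Submodule.mem_span_insert.1 ha
  obtain ⟨⟨d, hd⟩, b', hb', rfl⟩ := Submodule.mem_span_insert.1 hb
  simp only [Nonneg.mk_smul] at hab ⊢
  have hsum : a' + b' = (1 - c - d) • v := calc
    a' + b' = (c • v + a' + (d • v + b')) - c • v - d • v := by module
    _ = (1 - c - d) • v := by rw [← hab]; module
  have hcd : 1 - c - d ≤ 0 := by
    by_contra! hpos
    exact hv ((PointedCone.smul_mem_iff _ hpos).1 (hsum ▸ add_mem ha' hb'))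
  have hle : hull 𝕜 s ≤ hull 𝕜 (insert v s) := Submodule.span_mono (Set.subset_insert v s)
  have hrest : b' + (c + d - 1) • v ∈ hull 𝕜 (insert v s) :=
    add_mem (hle hb') (PointedCone.smul_mem _ (by linarith) (subset_hull (Set.mem_insert v s)))
  have ha'_zero : a' = 0 := eq_zero_of_add_eq_zero_of_salient hsal (hle ha') hrest (by
    rw [← add_assoc, hsum]
    module)
  exact ⟨c, hc, by rw [ha'_zero, add_zero]⟩

theorem hull_setOf_isExtremeVector {s : Set E} (hs : s.Finite)
    (hsal : (hull 𝕜 s : ConvexCone 𝕜 E).Salient) :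
    hull 𝕜 {x ∈ s | IsExtremeVector (hull 𝕜 s) x} = hull 𝕜 s := by
  have hfin : {t | t ⊆ s ∧ hull 𝕜 t = hull 𝕜 s}.Finite := hs.finite_subsets.subset fun t ht => ht.1
  obtain ⟨t, ⟨hts, ht⟩, hmin⟩ := hfin.exists_minimal ⟨s, subset_rfl, rfl⟩
  refine le_antisymm (Submodule.span_mono fun x hx => hx.1) ?_
  rw [← ht] at hsal ⊢
  refine Submodule.span_mono fun x hx => ⟨hts hx, ?_⟩
  have hinsert : insert x (t \ {x}) = t := Set.insert_sdiff_self_of_mem hx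
  have hx_notMem : x ∉ hull 𝕜 (t \ {x}) := fun hmem => by
    have hdiff : hull 𝕜 (t \ {x}) = hull 𝕜 t :=
      (Submodule.span_insert_eq_span hmem).symm.trans (congrArg (hull 𝕜) hinsert)
    exact (hmin ⟨Set.sdiff_subset.trans hts, hdiff.trans ht⟩ Set.sdiff_subset hx).2 rfl
  rw [← hinsert] at hsal ⊢
  exact isExtremeVector_hull_insert hsal hx_notMem

theorem exists_smul_add_eq_of_mem_hull {s : Set E} (hv : v ∈ hull 𝕜 s) (hv0 : v ≠ 0) :
    ∃ x ∈ s, ∃ c : 𝕜, 0 < c ∧ x ≠ 0 ∧ ∃ y ∈ hull 𝕜 s, v = c • x + y := by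
  induction hv using Submodule.span_induction with
  | mem x hx => exact ⟨x, hx, 1, one_pos, hv0, 0, zero_mem _, by simp⟩
  | zero => exact absurd rfl hv0
  | add u w hu hw ihu ihw =>
    by_cases hu0 : u = 0
    · obtain ⟨x, hx, c, hc, hx0, y, hy, rfl⟩ := ihw fun h => hv0 (by rw [hu0, h, add_zero])
      exact ⟨x, hx, c, hc, hx0, y, hy, by rw [hu0, zero_add]⟩
    · obtain ⟨x, hx, c, hc, hx0, y, hy, rfl⟩ := ihu hu0
      exact ⟨x, hx, c, hc, hx0, y + w, add_mem hy hw, add_assoc _ _ _⟩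
  | smul r u _ ihu =>
    have hr : 0 < (r : 𝕜) := r.2.lt_of_ne' fun h => hv0 (by
      rw [Subtype.ext (a1 := r) (a2 := 0) h, zero_smul])
    obtain ⟨x, hx, c, hc, hx0, y, hy, rfl⟩ := ihu fun h => hv0 (by rw [h, smul_zero])
    exact ⟨x, hx, r * c, mul_pos hr hc, hx0, r • y, Submodule.smul_mem _ r hy, by
      rw [smul_add, mul_smul]; rfl⟩

theorem IsExtremeVector.exists_eq_smul_of_mem_hull {s : Set E}
    (hv : IsExtremeVector (hull 𝕜 s) v) (hmem : v ∈ hull 𝕜 s) (hv0 : v ≠ 0) :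
    ∃ x ∈ s, ∃ c : 𝕜, 0 < c ∧ v = c • x := by
  obtain ⟨x, hx, c, hc, hx0, y, hy, hvxy⟩ := exists_smul_add_eq_of_mem_hull hmem hv0
  obtain ⟨⟨d, hd, hcx⟩, -⟩ := hv _ (PointedCone.smul_mem _ hc.le (subset_hull hx)) y hy hvxy
  have hd0 : d ≠ 0 := by
    rintro rfl
    exact smul_ne_zero hc.ne' hx0 (by rw [hcx, zero_smul])
  exact ⟨x, hx, d⁻¹ * c, mul_pos (inv_pos.2 (hd.lt_of_ne' hd0)) hc, by
    rw [mul_smul, hcx, inv_smul_smul₀ hd0]⟩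

end ExtremeVector

section SignedPoset

open PointedCone

variable {n : ℕ} {P : Set (Fin n → ℝ)} {f g : Fin n → ℝ} {I J K : Finset (SIdx n)}

theorem nnSpan_eq_hull (S : Set (Fin n → ℝ)) : nnSpan S = hull ℝ S := by
  ext x
  simp only [nnSpan, Set.mem_ofPred_eq, SetLike.mem_coe]
  constructor
  · rintro ⟨r, c, β, hc, hβ, rfl⟩
    exact sum_mem fun m _ => PointedCone.smul_mem _ (hc m) (subset_hull (hβ m))
  · intro hx
    obtain ⟨r, c, β, rfl⟩ := Submodule.mem_span_set'.1 hx
    exact ⟨r, fun m => c m, fun m => β m, fun m => (c m).2, fun m => (β m).2, rfl⟩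

/-- The weight cone `K^wt_P` bundled as a pointed cone. -/
def weightPointedCone (P : Set (Fin n → ℝ)) : PointedCone ℝ (Fin n → ℝ) where
  carrier := weightCone P
  zero_mem' α _ := (zero_dotProduct α).ge
  add_mem' hf hg α hα := (add_nonneg (hf α hα) (hg α hα)).trans_eq (add_dotProduct _ _ α).symm
  smul_mem' c f hf α hα := (mul_nonneg c.2 (hf α hα)).trans_eq (smul_dotProduct (c : ℝ) f α).symm

/-! ### Signed coordinates and the Fischer order -/

/-- The signed coordinate `⟨f, v(a)⟩` of `f` at `a ∈ ±[n] ∪ {0}`: it is `f i` at `i`, `-f i` at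
`-i`, and `0` at `0`. -/
def signedCoord (f : Fin n → ℝ) (a : Option (SIdx n)) : ℝ := dotR f (vO a)

theorem signedCoord_none : signedCoord f none = 0 := dotProduct_zero f

theorem signedCoord_some (a : SIdx n) : signedCoord f (some a) = rsgn a.1 * f a.2 := by
  simp [signedCoord, dotR, vO, vS, stdB, Pi.single_apply, mul_comm]

theorem signedCoord_add (a : Option (SIdx n)) :
    signedCoord (f + g) a = signedCoord f a + signedCoord g a :=
  add_dotProduct f g (vO a)

theorem signedCoord_smul (c : ℝ) (a : Option (SIdx n)) :
    signedCoord (c • f) a = c * signedCoord f a :=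
  smul_dotProduct c f (vO a)

theorem rsgn_not (s : Bool) : rsgn (!s) = -rsgn s := by
  cases s <;> simp [rsgn]

theorem vO_negO (a : Option (SIdx n)) : vO (negO a) = -vO a := by
  cases a <;> simp [vO, negO, vS, negS, rsgn_not]

theorem negS_negS (a : SIdx n) : negS (negS a) = a := by
  simp [negS]

theorem negO_negO (a : Option (SIdx n)) : negO (negO a) = a := by
  cases a <;> simp [negO, negS_negS]

theorem signedCoord_negO (a : Option (SIdx n)) : signedCoord f (negO a) = -signedCoord f a := by
  rw [signedCoord, vO_negO]
  exact dotProduct_neg f (vO a)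

theorem signedCoord_comp {φ : ℝ → ℝ} (hφ : φ.Odd) (a : Option (SIdx n)) :
    signedCoord (φ ∘ f) a = φ (signedCoord f a) := by
  rcases a with _ | ⟨_ | _, i⟩
  · simp [signedCoord_none, hφ.map_zero]
  · simp [signedCoord_some, rsgn, hφ (f i)]
  · simp [signedCoord_some, rsgn]

theorem fLT_negO {a b : Option (SIdx n)} (hab : fLT P a b) : fLT P (negO b) (negO a) := by
  rcases hab with hab | ⟨ha, rfl, haP⟩
  · left
    rwa [vO_negO, vO_negO, neg_sub_neg]
  · right
    rw [negO_negO]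
    exact ⟨ha, rfl, haP⟩

theorem signedCoord_le_of_fLT (hf : f ∈ weightCone P) {a b : Option (SIdx n)}
    (hab : fLT P a b) : signedCoord f b ≤ signedCoord f a := by
  rcases hab with hab | ⟨-, rfl, haP⟩
  · exact sub_nonneg.1 ((hf _ hab).trans_eq (dotProduct_sub f (vO a) (vO b)))
  · have ha : 0 ≤ signedCoord f a := hf _ haP
    rw [signedCoord_negO]
    linarith

theorem exists_eq_vO_sub_vO_of_mem_BnRoots {α : Fin n → ℝ} (hα : α ∈ BnRoots n) :
    ∃ a b : Option (SIdx n), α = vO a - vO b := by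
  rcases hα with ⟨i, j, -, s, t, rfl⟩ | ⟨i, s, rfl⟩
  · exact ⟨some (s, i), negO (some (t, j)), by rw [vO_negO, sub_neg_eq_add]; rfl⟩
  · exact ⟨some (s, i), none, (sub_zero _).symm⟩

theorem mem_weightCone_iff_signedCoord_le (hP : P ⊆ BnRoots n) :
    f ∈ weightCone P ↔ ∀ a b, fLT P a b → signedCoord f b ≤ signedCoord f a := by
  refine ⟨fun hf a b => signedCoord_le_of_fLT hf, fun hf α hα => ?_⟩
  obtain ⟨a, b, rfl⟩ := exists_eq_vO_sub_vO_of_mem_BnRoots (hP hα)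
  exact (sub_nonneg.2 (hf a b (Or.inl hα))).trans_eq (dotProduct_sub f (vO a) (vO b)).symm

theorem comp_mem_weightCone (hP : P ⊆ BnRoots n) (hf : f ∈ weightCone P) {φ : ℝ → ℝ}
    (hodd : φ.Odd) (hmono : Monotone φ) : φ ∘ f ∈ weightCone P := by
  refine (mem_weightCone_iff_signedCoord_le hP).2 fun a b hab => ?_
  simpa only [signedCoord_comp hodd] using hmono (signedCoord_le_of_fLT hf hab)

/-! ### Isotropic sets, ideals and characteristic vectors -/

theorem mem_image_negS {a : SIdx n} : a ∈ I.image negS ↔ negS a ∈ I := by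
  refine ⟨fun ha => ?_, fun ha => Finset.mem_image.2 ⟨_, ha, negS_negS a⟩⟩
  obtain ⟨b, hb, rfl⟩ := Finset.mem_image.1 ha
  rwa [negS_negS]

theorem negS_notMem_of_isotropic (hJ : Isotropic J) {a : SIdx n} (ha : a ∈ J) : negS a ∉ J := by
  obtain ⟨_ | _, i⟩ := a
  · exact fun h => hJ i ⟨h, ha⟩
  · exact fun h => hJ i ⟨ha, h⟩

theorem isotropic_of_subset (hJ : Isotropic J) (hKJ : K ⊆ J) : Isotropic K :=
  fun i hi => hJ i ⟨hKJ hi.1, hKJ hi.2⟩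

theorem chiF_union (hJI : Isotropic (J ∪ I)) (hd : Disjoint J I) :
    chiF (J ∪ I) = chiF J + chiF I := by
  ext i
  have hi := hJI i
  have hpos : (true, i) ∈ J → (true, i) ∉ I := fun h => Finset.disjoint_left.1 hd h
  have hneg : (false, i) ∈ J → (false, i) ∉ I := fun h => Finset.disjoint_left.1 hd h
  simp only [chiF, Pi.add_apply, Finset.mem_union] at hi ⊢
  split_ifs <;> simp_all

theorem chiF_image_negS (hI : Isotropic I) : chiF (I.image negS) = -chiF I := by
  ext i
  have hi := hI i
  simp only [chiF, Pi.neg_apply, mem_image_negS, negS, Bool.not_true, Bool.not_false]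
  split_ifs <;> simp_all

theorem signedCoord_chiF_of_mem (hJ : Isotropic J) {a : SIdx n} (ha : a ∈ J) :
    signedCoord (chiF J) (some a) = 1 := by
  have hna := negS_notMem_of_isotropic hJ ha
  obtain ⟨_ | _, i⟩ := a <;> simp_all [signedCoord_some, chiF, rsgn, negS]

theorem signedCoord_chiF_of_negS_mem (hJ : Isotropic J) {a : SIdx n} (ha : negS a ∈ J) :
    signedCoord (chiF J) (some a) = -1 := by
  rw [← negO_negO (some a), signedCoord_negO, negO, signedCoord_chiF_of_mem hJ ha]

theorem signedCoord_chiF_of_notMem {a : SIdx n} (ha : a ∉ J) (hna : negS a ∉ J) :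
    signedCoord (chiF J) (some a) = 0 := by
  obtain ⟨_ | _, i⟩ := a <;> simp_all [signedCoord_some, chiF, negS]

theorem signedCoord_chiF_nonpos_or_mem (hJ : Isotropic J) (a : Option (SIdx n)) :
    signedCoord (chiF J) a ≤ 0 ∨ ∃ b ∈ J, a = some b := by
  rcases a with _ | a
  · exact .inl signedCoord_none.le
  by_cases ha : a ∈ J
  · exact .inr ⟨a, ha, rfl⟩
  by_cases hna : negS a ∈ J
  · exact .inl ((signedCoord_chiF_of_negS_mem hJ hna).trans_le (by norm_num))
  · exact .inl (signedCoord_chiF_of_notMem ha hna).le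

theorem chiF_ne_zero (hJ : Isotropic J) (hne : J.Nonempty) : chiF J ≠ 0 := by
  obtain ⟨a, ha⟩ := hne
  intro h0
  simpa [h0, signedCoord_some] using signedCoord_chiF_of_mem hJ ha

theorem isIdeal_iff_fLT (hP : P ⊆ BnRoots n) :
    IsIdeal P J ↔ Isotropic J ∧ (∀ b ∈ J, ¬ fLT P none (some b)) ∧
      ∀ a, ∀ b ∈ J, fLT P (some a) (some b) → a ∈ J := by
  refine and_congr_right fun hJ => ⟨fun hχ => ?_, fun ⟨hnone, hdown⟩ => ?_⟩
  · have one_le {a b} (hb : b ∈ J) (hab : fLT P a (some b)) : 1 ≤ signedCoord (chiF J) a :=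
      (signedCoord_chiF_of_mem hJ hb).symm.trans_le (signedCoord_le_of_fLT hχ hab)
    refine ⟨fun b hb hlt => ?_, fun a b hb hab => ?_⟩
    · linarith [one_le hb hlt, signedCoord_none (f := chiF J)]
    · rcases signedCoord_chiF_nonpos_or_mem hJ (some a) with ha | ⟨a', ha', ha_eq⟩
      · linarith [one_le hb hab]
      · rwa [Option.some.inj ha_eq]
  · have eq_one {a b} (hb : b ∈ J) (hab : fLT P a (some b)) : signedCoord (chiF J) a = 1 := by
      rcases a with _ | a
      · exact absurd hab (hnone b hb)
      · exact signedCoord_chiF_of_mem hJ (hdown a b hb hab)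
    refine (mem_weightCone_iff_signedCoord_le hP).2 fun a b hab => ?_
    rcases signedCoord_chiF_nonpos_or_mem hJ b with hb | ⟨b', hb', rfl⟩
    · rcases signedCoord_chiF_nonpos_or_mem hJ (negO a) with ha | ⟨a', ha', ha_eq⟩
      · linarith [signedCoord_negO (f := chiF J) a]
      · have hba := eq_one ha' (ha_eq ▸ fLT_negO hab)
        have ha := signedCoord_chiF_of_mem hJ ha'
        rw [← ha_eq] at ha
        rw [signedCoord_negO] at ha hba
        linarith
    · rw [eq_one hb' hab, signedCoord_chiF_of_mem hJ hb']

/-! ### Connected components -/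

theorem isIdeal_of_fComp_closed (hP : P ⊆ BnRoots n) (hJ : IsIdeal P J) (hKJ : K ⊆ J)
    (hclosed : ∀ a ∈ K, ∀ b ∈ J, fComp P a b → b ∈ K) : IsIdeal P K := by
  obtain ⟨hiso, hnone, hdown⟩ := (isIdeal_iff_fLT hP).1 hJ
  exact (isIdeal_iff_fLT hP).2 ⟨isotropic_of_subset hiso hKJ, fun b hb => hnone b (hKJ hb),
    fun a b hb hab => hclosed b hb a (hdown a b (hKJ hb) hab) (.inr hab)⟩

theorem mem_componentIn {a b : SIdx n} :
    b ∈ componentIn P J a ↔ b ∈ J ∧ Relation.ReflTransGen (connStep P J) a b :=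
  Finset.mem_filter

theorem mem_componentIn_of_fComp {a b c : SIdx n} (hb : b ∈ componentIn P J a) (hc : c ∈ J)
    (hbc : fComp P b c) : c ∈ componentIn P J a := by
  rw [mem_componentIn] at hb ⊢
  exact ⟨hc, hb.2.tail ⟨hb.1, hc, hbc⟩⟩

theorem connStep_symm : Std.Symm (connStep P J) :=
  ⟨fun _ _ hab => ⟨hab.2.1, hab.1, hab.2.2.symm⟩⟩

theorem isConnectedIdl_componentIn {a : SIdx n} (ha : a ∈ J) :
    IsConnectedIdl P (componentIn P J a) := by
  have path_inside {b} (hb : b ∈ componentIn P J a) :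
      Relation.ReflTransGen (connStep P (componentIn P J a)) a b := by
    induction (mem_componentIn.1 hb).2 with
    | refl => exact .refl
    | tail hac hcd ih =>
      have hc := mem_componentIn.2 ⟨hcd.1, hac⟩
      exact (ih hc).tail ⟨hc, mem_componentIn.2 ⟨hcd.2.1, hac.tail hcd⟩, hcd.2.2⟩
  refine ⟨⟨a, mem_componentIn.2 ⟨ha, .refl⟩⟩, fun b hb c hc => ?_⟩
  have := connStep_symm (P := P) (J := componentIn P J a)
  exact (symm (path_inside hb)).trans (path_inside hc)

theorem chiF_mem_hull_connIdeal (hP : P ⊆ BnRoots n) (hJ : IsIdeal P J) :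
    chiF J ∈ hull ℝ (chiF '' {K | IsConnIdeal P K}) := by
  induction J using Finset.strongInduction with
  | H J ih =>
    rcases J.eq_empty_or_nonempty with rfl | ⟨a, ha⟩
    · convert zero_mem (hull ℝ (chiF '' {K | IsConnIdeal P K})) using 1
      ext i
      simp [chiF]
    have hsub : componentIn P J a ⊆ J := Finset.filter_subset _ _
    have hcomp : IsConnIdeal P (componentIn P J a) :=
      ⟨isIdeal_of_fComp_closed hP hJ hsub fun b hb c => mem_componentIn_of_fComp hb,
        isConnectedIdl_componentIn ha⟩
    have hrest : IsIdeal P (J \ componentIn P J a) := by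
      refine isIdeal_of_fComp_closed hP hJ Finset.sdiff_subset fun b hb c hc hbc => ?_
      rw [Finset.mem_sdiff] at hb ⊢
      exact ⟨hc, fun hca => hb.2 (mem_componentIn_of_fComp hca hb.1 hbc.symm)⟩
    have hunion := Finset.union_sdiff_of_subset hsub
    rw [← hunion, chiF_union (hunion.symm ▸ hJ.1) Finset.disjoint_sdiff]
    exact add_mem (subset_hull ⟨_, hcomp, rfl⟩)
      (ih _ (Finset.sdiff_ssubset hsub hcomp.2.1) hrest)

/-! ### Signed supports and generation by connected ideals -/

theorem mem_suppPM_iff {a : SIdx n} : a ∈ suppPM f ↔ 0 < signedCoord f (some a) := by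
  obtain ⟨_ | _, i⟩ := a <;> simp [suppPM, signedCoord_some, rsgn]

theorem suppPM_nonempty (hf : f ≠ 0) : (suppPM f).Nonempty := by
  obtain ⟨i, hi⟩ := Function.ne_iff.1 hf
  rcases lt_or_gt_of_ne hi with hneg | hpos
  · exact ⟨(false, i), by simpa [suppPM] using hneg⟩
  · exact ⟨(true, i), by simpa [suppPM] using hpos⟩

theorem isotropic_suppPM : Isotropic (suppPM f) := by
  rintro i ⟨hpos, hneg⟩
  simp only [suppPM, Finset.mem_filter, Finset.mem_univ, true_and] at hpos hneg
  exact lt_asymm hpos hneg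

theorem image_negS_suppPM : (suppPM f).image negS = suppPM (-f) := by
  ext a
  rw [mem_image_negS]
  obtain ⟨_ | _, i⟩ := a <;> simp [suppPM, negS]

theorem chiF_suppPM : chiF (suppPM f) = (fun x : ℝ => (SignType.sign x : ℝ)) ∘ f := by
  ext i
  rcases lt_trichotomy (f i) 0 with h | h | h <;> simp [chiF, suppPM, h, h.not_gt]

theorem monotone_signType_cast {R : Type*} [Ring R] [LinearOrder R] [IsStrictOrderedRing R] :
    Monotone ((↑) : SignType → R) := by
  rintro (_ | _ | _) (_ | _ | _) hst <;> revert hst <;> simp [SignType.cast]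

theorem isIdeal_suppPM (hP : P ⊆ BnRoots n) (hf : f ∈ weightCone P) : IsIdeal P (suppPM f) := by
  refine ⟨isotropic_suppPM, ?_⟩
  rw [chiF_suppPM]
  exact comp_mem_weightCone hP hf (fun x => by simp [Left.sign_neg])
    (monotone_signType_cast.comp SignType.sign.monotone)

/-- Soft thresholding: moves `x` towards `0` by `t`, stopping at `0`. -/
def softThreshold (t x : ℝ) : ℝ := max (x - t) 0 + min (x + t) 0

theorem softThreshold_odd (t : ℝ) : (softThreshold t).Odd := fun x => by
  simp only [softThreshold, neg_add, ← min_neg_neg, ← max_neg_neg]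
  ring_nf

theorem softThreshold_monotone (t : ℝ) : Monotone (softThreshold t) := fun x y hxy => by
  unfold softThreshold
  gcongr

theorem softThreshold_of_le {t x : ℝ} (ht : 0 ≤ t) (htx : t ≤ x) : softThreshold t x = x - t := by
  rw [softThreshold, max_eq_left (by linarith), min_eq_right (by linarith), add_zero]

theorem eq_smul_chiF_suppPM_add_softThreshold {t : ℝ} (ht : 0 ≤ t)
    (hle : ∀ a ∈ suppPM f, t ≤ signedCoord f (some a)) :
    f = t • chiF (suppPM f) + softThreshold t ∘ f := by
  ext i
  rw [chiF_suppPM]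
  have hpos := hle (true, i)
  have hneg := hle (false, i)
  simp only [mem_suppPM_iff, signedCoord_some, rsgn] at hpos hneg
  rcases lt_trichotomy (f i) 0 with h | h | h
  · have hthr := softThreshold_odd t (f i)
    rw [softThreshold_of_le ht (by simpa using hneg (by simpa using h))] at hthr
    simp only [Pi.add_apply, Pi.smul_apply, Function.comp_apply, sign_neg h, SignType.coe_neg_one,
      smul_eq_mul]
    linarith
  · simp [h, (softThreshold_odd t).map_zero]
  · simp [h, softThreshold_of_le ht (by simpa using hpos (by simpa using h))]

theorem suppPM_softThreshold_ssubset {a : SIdx n} (ha : a ∈ suppPM f) :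
    suppPM (softThreshold (signedCoord f (some a)) ∘ f) ⊂ suppPM f := by
  set t := signedCoord f (some a) with ht
  have ht0 : 0 < t := mem_suppPM_iff.1 ha
  refine (Finset.ssubset_iff_of_subset fun b hb => ?_).2 ⟨a, ha, ?_⟩
  · rw [mem_suppPM_iff, signedCoord_comp (softThreshold_odd t)] at hb
    rw [mem_suppPM_iff]
    by_contra! hb0
    have hle_zero := softThreshold_monotone t hb0
    rw [(softThreshold_odd t).map_zero] at hle_zero
    exact hb.not_ge hle_zero
  · rw [mem_suppPM_iff, signedCoord_comp (softThreshold_odd t), ← ht,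
      softThreshold_of_le ht0.le le_rfl, sub_self]
    exact lt_irrefl 0

theorem mem_hull_connIdeal_of_mem_weightCone (hP : P ⊆ BnRoots n) (hf : f ∈ weightCone P) :
    f ∈ hull ℝ (chiF '' {J | IsConnIdeal P J}) := by
  induction hS : suppPM f using Finset.strongInduction generalizing f with
  | H S ih =>
    subst hS
    rcases eq_or_ne f 0 with rfl | hf0
    · exact zero_mem _
    obtain ⟨a, ha, hmin⟩ := Finset.exists_min_image (suppPM f) (fun a => signedCoord f (some a))
      (suppPM_nonempty hf0)
    set t := signedCoord f (some a)
    have ht : 0 ≤ t := (mem_suppPM_iff.1 ha).le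
    rw [eq_smul_chiF_suppPM_add_softThreshold ht hmin]
    exact add_mem
      (PointedCone.smul_mem _ ht (chiF_mem_hull_connIdeal hP (isIdeal_suppPM hP hf)))
      (ih _ (suppPM_softThreshold_ssubset ha)
        (comp_mem_weightCone hP hf (softThreshold_odd t) (softThreshold_monotone t)) rfl)

theorem hull_connIdeal (hP : P ⊆ BnRoots n) :
    hull ℝ (chiF '' {J | IsConnIdeal P J}) = weightPointedCone P := by
  refine le_antisymm (Submodule.span_le.2 ?_) fun f => mem_hull_connIdeal_of_mem_weightCone hP
  rintro _ ⟨J, hJ, rfl⟩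
  exact hJ.1.2

/-! ### Extensibility and extremality -/

theorem not_isExtremeVector_of_extensible (hext : Extensible n P J) :
    ¬ IsExtremeVector (weightPointedCone P) (chiF J) := by
  intro hχ
  obtain ⟨I, ⟨x, hx⟩, hIJ, hpos, hneg⟩ := hext
  have negS_notMem {y} (hy : y ∈ I) : negS y ∉ J := fun h =>
    negS_notMem_of_isotropic hpos.1 (Finset.mem_union_right _ hy) (Finset.mem_union_left _ h)
  have hI : Isotropic I := isotropic_of_subset hpos.1 Finset.subset_union_right
  have hdneg : Disjoint J (I.image negS) := Finset.disjoint_right.2 fun y hy => by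
    simpa only [negS_negS] using negS_notMem (mem_image_negS.1 hy)
  have havg : chiF J = (1 / 2 : ℝ) • chiF (J ∪ I) + (1 / 2 : ℝ) • chiF (J ∪ I.image negS) := by
    rw [chiF_union hpos.1 hIJ.symm, chiF_union hneg.1 hdneg, chiF_image_negS hI]
    module
  have half_mem {K} (hK : IsIdeal P K) : (1 / 2 : ℝ) • chiF K ∈ weightPointedCone P :=
    PointedCone.smul_mem _ (by norm_num) hK.2
  obtain ⟨⟨c, -, hc⟩, -⟩ := hχ _ (half_mem hpos) _ (half_mem hneg) havg
  have hcoord := congrArg (fun h => signedCoord h (some x)) hc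
  simp only [signedCoord_smul, signedCoord_chiF_of_mem hpos.1 (Finset.mem_union_right J hx),
    signedCoord_chiF_of_notMem (Finset.disjoint_left.1 hIJ hx) (negS_notMem hx)] at hcoord
  norm_num at hcoord

theorem suppPM_smul_chiF_add (hJ : Isotropic J) {M : ℝ} (hM : 0 < M)
    (hg : ∀ a ∈ J, signedCoord g (some a) = 0) :
    suppPM (M • chiF J + g) = J ∪ suppPM g := by
  ext a
  rw [Finset.mem_union, mem_suppPM_iff, mem_suppPM_iff, signedCoord_add, signedCoord_smul]
  by_cases ha : a ∈ J
  · simp [ha, signedCoord_chiF_of_mem hJ ha, hg a ha, hM]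
  by_cases hna : negS a ∈ J
  · have hga : -signedCoord g (some a) = 0 := (signedCoord_negO (some a)).symm.trans (hg _ hna)
    simp [ha, signedCoord_chiF_of_negS_mem hJ hna, neg_eq_zero.1 hga, hM.le]
  · simp [ha, signedCoord_chiF_of_notMem ha hna]

theorem extensible_of_smul_chiF_add_mem (hP : P ⊆ BnRoots n) (hJ : Isotropic J) {M : ℝ}
    (hM : 0 < M) (hg0 : g ≠ 0) (hg : ∀ a ∈ J, signedCoord g (some a) = 0)
    (hadd : M • chiF J + g ∈ weightCone P) (hsub : M • chiF J + -g ∈ weightCone P) :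
    Extensible n P J := by
  have hneg : ∀ a ∈ J, signedCoord (-g) (some a) = 0 := fun a ha => by
    simpa [signedCoord_some] using hg a ha
  refine ⟨suppPM g, suppPM_nonempty hg0, ?_, ?_, ?_⟩
  · exact Finset.disjoint_right.2 fun a ha hag => (mem_suppPM_iff.1 hag).ne' (hg a ha)
  · rw [← suppPM_smul_chiF_add hJ hM hg]
    exact isIdeal_suppPM hP hadd
  · rw [image_negS_suppPM, ← suppPM_smul_chiF_add hJ hM hneg]
    exact isIdeal_suppPM hP hsub

theorem signedCoord_eq_of_fLT_of_add_eq_chiF (hJ : Isotropic J) (hf : f ∈ weightCone P)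
    (hg : g ∈ weightCone P) (hfg : chiF J = f + g) {a b : SIdx n} (ha : a ∈ J) (hb : b ∈ J)
    (hab : fLT P (some a) (some b)) : signedCoord f (some a) = signedCoord f (some b) := by
  have add_eq_one {c} (hc : c ∈ J) : signedCoord f (some c) + signedCoord g (some c) = 1 := by
    rw [← signedCoord_add, ← hfg, signedCoord_chiF_of_mem hJ hc]
  linarith [add_eq_one ha, add_eq_one hb, signedCoord_le_of_fLT hf hab,
    signedCoord_le_of_fLT hg hab]

theorem exists_signedCoord_eq_of_add_eq_chiF (hJ : IsConnIdeal P J) (hf : f ∈ weightCone P)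
    (hg : g ∈ weightCone P) (hfg : chiF J = f + g) :
    ∃ c, ∀ a ∈ J, signedCoord f (some a) = c := by
  obtain ⟨a, ha⟩ := hJ.2.1
  refine ⟨signedCoord f (some a), fun b hb => ?_⟩
  have hpath := hJ.2.2 a ha b hb
  clear hb
  induction hpath with
  | refl => rfl
  | tail _ hstep ih =>
    obtain ⟨hc, hd, hcd | hdc⟩ := hstep
    · rw [← ih, signedCoord_eq_of_fLT_of_add_eq_chiF hJ.1.1 hf hg hfg hc hd hcd]
    · rw [← ih, signedCoord_eq_of_fLT_of_add_eq_chiF hJ.1.1 hf hg hfg hd hc hdc]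

theorem exists_eq_smul_chiF_of_not_extensible (hP : P ⊆ BnRoots n) (hJ : IsConnIdeal P J)
    (hext : ¬ Extensible n P J) (hf : f ∈ weightCone P) (hg : g ∈ weightCone P)
    (hfg : chiF J = f + g) : ∃ c : ℝ, f = c • chiF J := by
  obtain ⟨c, hc⟩ := exists_signedCoord_eq_of_add_eq_chiF hJ hf hg hfg
  refine ⟨c, ?_⟩
  by_contra hne
  have add_smul_mem {h} (hh : h ∈ weightCone P) {r : ℝ} (hr : 0 ≤ r) :
      h + r • chiF J ∈ weightCone P :=
    (weightPointedCone P).add_mem hh (PointedCone.smul_mem _ hr hJ.1.2)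
  refine hext (extensible_of_smul_chiF_add_mem (g := f + (-c) • chiF J) (M := |c| + 1) hP hJ.1.1
    (by positivity) (fun h0 => hne ?_) (fun a ha => ?_) ?_ ?_)
  · rwa [neg_smul, ← sub_eq_add_neg, sub_eq_zero] at h0
  · rw [signedCoord_add, signedCoord_smul, hc a ha, signedCoord_chiF_of_mem hJ.1.1 ha]
    ring
  · convert add_smul_mem hf (r := |c| + 1 - c) (by linarith [le_abs_self c]) using 1
    module
  · convert add_smul_mem hg (r := |c| + c) (by linarith [neg_abs_le c]) using 1
    rw [eq_sub_of_add_eq hfg.symm]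
    module

theorem isExtremeVector_of_not_extensible (hP : P ⊆ BnRoots n)
    (hsal : (weightPointedCone P : ConvexCone ℝ (Fin n → ℝ)).Salient) (hJ : IsConnIdeal P J)
    (hext : ¬ Extensible n P J) : IsExtremeVector (weightPointedCone P) (chiF J) := by
  refine .of_left fun f hf g hg hfg => ?_
  obtain ⟨c, rfl⟩ := exists_eq_smul_chiF_of_not_extensible hP hJ hext hf hg hfg
  refine ⟨c, ?_, rfl⟩
  by_contra! hc
  refine hsal (chiF J) hJ.1.2 (chiF_ne_zero hJ.1.1 hJ.2.1)
    ((PointedCone.smul_mem_iff _ (neg_pos.2 hc)).1 ?_)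
  rwa [smul_neg, neg_smul, neg_neg]

theorem isExtremeVector_chiF_iff (hP : P ⊆ BnRoots n)
    (hsal : (weightPointedCone P : ConvexCone ℝ (Fin n → ℝ)).Salient) (hJ : IsConnIdeal P J) :
    IsExtremeVector (weightPointedCone P) (chiF J) ↔ ¬ Extensible n P J :=
  ⟨fun hχ hext => not_isExtremeVector_of_extensible hext hχ,
    isExtremeVector_of_not_extensible hP hsal hJ⟩

theorem hull_nonextensible_connIdeal (hP : P ⊆ BnRoots n)
    (hsal : (weightPointedCone P : ConvexCone ℝ (Fin n → ℝ)).Salient) :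
    hull ℝ {x | ∃ J : Finset (SIdx n), IsConnIdeal P J ∧ ¬Extensible n P J ∧ x = chiF J} =
      weightPointedCone P := by
  rw [← hull_connIdeal hP] at hsal
  rw [← hull_connIdeal hP, ← hull_setOf_isExtremeVector (Set.toFinite _) hsal]
  rw [hull_connIdeal hP] at hsal ⊢
  congr 1
  ext x
  constructor
  · rintro ⟨J, hJ, hext, rfl⟩
    exact ⟨⟨J, hJ, rfl⟩, (isExtremeVector_chiF_iff hP hsal hJ).2 hext⟩
  · rintro ⟨⟨J, hJ, rfl⟩, hχ⟩
    exact ⟨J, hJ, (isExtremeVector_chiF_iff hP hsal hJ).1 hχ, rfl⟩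

end SignedPoset

theorem statement_9_general (n : ℕ) (P : Set (Fin n → ℝ)) (hP : P ⊆ BnRoots n)
    (hpt : ∀ f : Fin n → ℝ, f ∈ weightCone P → -f ∈ weightCone P → f = 0) :
    weightCone P =
      nnSpan {x | ∃ J : Finset (SIdx n), IsConnIdeal P J ∧ ¬Extensible n P J ∧ x = chiF J} ∧
    ∀ v ∈ weightCone P, v ≠ 0 →
      ((∀ a ∈ weightCone P, ∀ b ∈ weightCone P, v = a + b →
          (∃ c : ℝ, 0 ≤ c ∧ a = c • v) ∧ ∃ c : ℝ, 0 ≤ c ∧ b = c • v) ↔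
        ∃ J : Finset (SIdx n), IsConnIdeal P J ∧ ¬Extensible n P J ∧
          ∃ c : ℝ, 0 < c ∧ v = c • chiF J) := by
  have hsal : (weightPointedCone P : ConvexCone ℝ (Fin n → ℝ)).Salient :=
    fun f hf hf0 hnf => hf0 (hpt f hf hnf)
  have hhull := hull_nonextensible_connIdeal hP hsal
  refine ⟨by rw [nnSpan_eq_hull, hhull]; rfl, fun v hv hv0 => ⟨fun hext => ?_, ?_⟩⟩
  · have hv_extreme : IsExtremeVector (weightPointedCone P) v := hext
    rw [← hhull] at hv_extreme
    obtain ⟨_, ⟨J, hJ, hJext, rfl⟩, c, hc, hvc⟩ :=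
      hv_extreme.exists_eq_smul_of_mem_hull (hhull.ge hv) hv0
    exact ⟨J, hJ, hJext, c, hc, hvc⟩
  · rintro ⟨J, hJ, hJext, c, hc, rfl⟩
    exact ((isExtremeVector_chiF_iff hP hsal hJ).2 hJext).smul hc

theorem statement_9 (n : ℕ) (hn : 1 ≤ n) (P : Set (Fin n → ℝ)) (hP : IsSignedPoset n P)
    (hpt : ∀ f : Fin n → ℝ, f ∈ weightCone P → -f ∈ weightCone P → f = 0) :
    weightCone P =
      nnSpan {x | ∃ J : Finset (SIdx n), IsConnIdeal P J ∧ ¬Extensible n P J ∧ x = chiF J} ∧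
    ∀ v ∈ weightCone P, v ≠ 0 →
      ((∀ a ∈ weightCone P, ∀ b ∈ weightCone P, v = a + b →
          (∃ c : ℝ, 0 ≤ c ∧ a = c • v) ∧ ∃ c : ℝ, 0 ≤ c ∧ b = c • v) ↔
        ∃ J : Finset (SIdx n), IsConnIdeal P J ∧ ¬Extensible n P J ∧
          ∃ c : ℝ, 0 < c ∧ v = c • chiF J) :=
  statement_9_general n P hP.1 hpt
end
end

section
/- Let P ⊆ Φ_{B_n} be a signed poset, let f ∈ ℝ^n satisfy ⟨f, α⟩ ≥ 0 for all α ∈ P, and let c > 0. Define ε ∈ {−1,0,1}^n by ε_i = 1 if f_i ≥ c, ε_i = −1 if f_i ≤ −c, and ε_i = 0 otherwise. Then ⟨ε, α⟩ ≥ 0 for all α ∈ P; equivalently, the set J = {sgn(f_i)·i : 1 ≤ i ≤ n, |f_i| ≥ c} is an ideal of P. -/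
open scoped Classical

noncomputable section

/-!
Pairing `f` with a root of type `B_n` gives `± f_i` or `± f_i ± f_j`. Nonnegativity of such an
expression reads `0 ≤ x` or `-y ≤ x` with `x, y ∈ {± f_i}`, and every odd monotone function applied
to the coordinates of `f` preserves both inequalities. Cutting off at the threshold `c > 0` is such
a function.
-/

theorem map_add_map_nonneg_of_odd_of_monotone {G H : Type*} [AddGroup G] [Preorder G]
    [AddRightMono G] [AddGroup H] [Preorder H] [AddRightMono H] {φ : G → H} (hodd : φ.Odd)
    (hmono : Monotone φ) {x y : G} (hxy : 0 ≤ x + y) : 0 ≤ φ x + φ y := by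
  have hle : φ (-y) ≤ φ x := hmono (neg_le_iff_add_nonneg.mpr hxy)
  rwa [hodd, neg_le_iff_add_nonneg] at hle

section Roots

variable {n : ℕ} {φ : ℝ → ℝ}

theorem dotR_add (x y z : Fin n → ℝ) : dotR x (y + z) = dotR x y + dotR x z :=
  dotProduct_add x y z

theorem dotR_smul_stdB (x : Fin n → ℝ) (r : ℝ) (i : Fin n) :
    dotR x (r • stdB n i) = r * x i := by
  change x ⬝ᵥ (r • Pi.single i 1) = r * x i
  rw [dotProduct_smul, dotProduct_single_one, smul_eq_mul]

theorem map_rsgn_mul_of_odd (hodd : φ.Odd) (s : Bool) (x : ℝ) :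
    φ (rsgn s * x) = rsgn s * φ x := by
  cases s <;> simp [rsgn, hodd x]

theorem dotR_comp_nonneg_of_mem_BnRoots (hodd : φ.Odd) (hmono : Monotone φ) {f α : Fin n → ℝ}
    (hα : α ∈ BnRoots n) (hf : 0 ≤ dotR f α) : 0 ≤ dotR (φ ∘ f) α := by
  rcases hα with ⟨i, j, -, s, t, rfl⟩ | ⟨i, s, rfl⟩
  · simp only [dotR_add, dotR_smul_stdB, Function.comp_apply, ← map_rsgn_mul_of_odd hodd] at hf ⊢
    exact map_add_map_nonneg_of_odd_of_monotone hodd hmono hf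
  · simp only [dotR_smul_stdB, Function.comp_apply, ← map_rsgn_mul_of_odd hodd] at hf ⊢
    simpa only [hodd.map_zero] using hmono hf

end Roots

section Threshold

variable {n : ℕ} {c : ℝ}

/-- The sign of `x` cut off at the threshold `c`: it vanishes for `|x| < c`. For `c ≤ 0`, where the
two cases overlap, the value `1` takes precedence. -/
def thresholdSign (c x : ℝ) : ℝ := if c ≤ x then 1 else if x ≤ -c then -1 else 0

/-- The set `{sgn(f_i)·i : |f_i| ≥ c}` of signed indices at which `f` reaches the threshold `c`. -/
def thresholdSupport (c : ℝ) (f : Fin n → ℝ) : Finset (SIdx n) :=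
  Finset.univ.filter (fun a : SIdx n => if a.1 then c ≤ f a.2 else f a.2 ≤ -c)

theorem odd_thresholdSign (hc : 0 < c) : (thresholdSign c).Odd := by
  intro x
  unfold thresholdSign
  split_ifs <;> linarith

theorem monotone_thresholdSign (c : ℝ) : Monotone (thresholdSign c) := by
  intro x y hxy
  unfold thresholdSign
  split_ifs <;> linarith

theorem true_mem_thresholdSupport {f : Fin n → ℝ} {i : Fin n} :
    (true, i) ∈ thresholdSupport c f ↔ c ≤ f i := by
  simp [thresholdSupport]

theorem false_mem_thresholdSupport {f : Fin n → ℝ} {i : Fin n} :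
    (false, i) ∈ thresholdSupport c f ↔ f i ≤ -c := by
  simp [thresholdSupport]

theorem isotropic_thresholdSupport (hc : 0 < c) (f : Fin n → ℝ) :
    Isotropic (thresholdSupport c f) := by
  rintro i ⟨hpos, hneg⟩
  rw [true_mem_thresholdSupport] at hpos
  rw [false_mem_thresholdSupport] at hneg
  linarith

theorem chiF_thresholdSupport (c : ℝ) (f : Fin n → ℝ) :
    chiF (thresholdSupport c f) = thresholdSign c ∘ f := by
  funext i
  simp only [chiF, true_mem_thresholdSupport, false_mem_thresholdSupport, thresholdSign,
    Function.comp_apply]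

end Threshold

theorem statement_13_general (n : ℕ) (P : Set (Fin n → ℝ)) (hP : P ⊆ BnRoots n)
    (f : Fin n → ℝ) (hf : ∀ α ∈ P, 0 ≤ dotR f α) (c : ℝ) (hc : 0 < c) :
    (∀ α ∈ P,
      0 ≤ dotR (fun i => if c ≤ f i then (1 : ℝ) else if f i ≤ -c then -1 else 0) α) ∧
    IsIdeal P
      (Finset.univ.filter (fun a : SIdx n => if a.1 then c ≤ f a.2 else f a.2 ≤ -c)) := by
  have pairing_nonneg : ∀ α ∈ P, 0 ≤ dotR (thresholdSign c ∘ f) α := fun α hα =>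
    dotR_comp_nonneg_of_mem_BnRoots (odd_thresholdSign hc) (monotone_thresholdSign c)
      (hP hα) (hf α hα)
  refine ⟨pairing_nonneg, isotropic_thresholdSupport hc f, ?_⟩
  change ∀ α ∈ P, 0 ≤ dotR (chiF (thresholdSupport c f)) α
  rwa [chiF_thresholdSupport]

theorem statement_13 (n : ℕ) (hn : 1 ≤ n) (P : Set (Fin n → ℝ)) (hP : IsSignedPoset n P)
    (f : Fin n → ℝ) (hf : ∀ α ∈ P, 0 ≤ dotR f α) (c : ℝ) (hc : 0 < c) :
    (∀ α ∈ P,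
      0 ≤ dotR (fun i => if c ≤ f i then (1 : ℝ) else if f i ≤ -c then -1 else 0) α) ∧
    IsIdeal P
      (Finset.univ.filter (fun a : SIdx n => if a.1 then c ≤ f a.2 else f a.2 ≤ -c)) :=
  statement_13_general n P hP.1 f hf c hc
end
end
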